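/- Let G be a strong tournament of order at least 3. Then the average distance of ILTT_d^t(G) converges as t → ∞, with lim_{t→∞} L(ILTT_d^t(G)) = 3/2. -/

import Mathlib

open scoped Classical

noncomputable section

/-- A tournament: a finite directed graph where every pair of distinct nodes
is joined by exactly one arc. -/
structure Tournament where
  V : Type
  [fintypeV : Fintype V]
  [decEqV : DecidableEq V]
  arc : V → V → Prop
  irrefl : ∀ x, ¬ arc x x
  exactlyOne : ∀ x y, x ≠ y → (arc x y ↔ ¬ arc y x)

attribute [instance] Tournament.fintypeV Tournament.decEqV

namespace Tournament

/-- The ILTT extension: vertices are `V ⊕ V` where `Sum.inl x` is the original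
node `x` and `Sum.inr x` is its clone `x'`. -/
def ILTT (T : Tournament) : Tournament where
  V := T.V ⊕ T.V
  arc := fun u v =>
    match u, v with
    | Sum.inl x, Sum.inl y => T.arc x y
    | Sum.inl x, Sum.inr y => T.arc x y
    | Sum.inr x, Sum.inl y => T.arc x y ∨ x = y
    | Sum.inr x, Sum.inr y => T.arc x y
  irrefl := by rintro (x | x) h <;> exact T.irrefl x h
  exactlyOne := by
    rintro (x | x) (y | y) hxy
    · exact T.exactlyOne x y (fun h => hxy (by rw [h]))
    · by_cases h : x = y
      · subst h; simp [T.irrefl x]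
      · have := T.exactlyOne x y h
        simp only [not_or]
        constructor
        · intro ha; exact ⟨this.mp ha, fun h' => h h'.symm⟩
        · intro ha; exact this.mpr ha.1
    · by_cases h : x = y
      · subst h; simp [T.irrefl x]
      · have := T.exactlyOne x y h
        constructor
        · rintro (ha | ha)
          · exact this.mp ha
          · exact absurd ha h
        · intro ha; exact Or.inl (this.mpr ha)
    · exact T.exactlyOne x y (fun h => hxy (by rw [h]))

/-- The dual ILTT extension: identical to `ILTT` except the arcs between
clones are reversed. -/
def ILTTd (T : Tournament) : Tournament where
  V := T.V ⊕ T.V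
  arc := fun u v =>
    match u, v with
    | Sum.inl x, Sum.inl y => T.arc x y
    | Sum.inl x, Sum.inr y => T.arc x y
    | Sum.inr x, Sum.inl y => T.arc x y ∨ x = y
    | Sum.inr x, Sum.inr y => T.arc y x
  irrefl := by rintro (x | x) h <;> exact T.irrefl x h
  exactlyOne := by
    rintro (x | x) (y | y) hxy
    · exact T.exactlyOne x y (fun h => hxy (by rw [h]))
    · by_cases h : x = y
      · subst h; simp [T.irrefl x]
      · have := T.exactlyOne x y h
        simp only [not_or]
        constructor
        · intro ha; exact ⟨this.mp ha, fun h' => h h'.symm⟩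
        · intro ha; exact this.mpr ha.1
    · by_cases h : x = y
      · subst h; simp [T.irrefl x]
      · have := T.exactlyOne x y h
        constructor
        · rintro (ha | ha)
          · exact this.mp ha
          · exact absurd ha h
        · intro ha; exact Or.inl (this.mpr ha)
    · exact T.exactlyOne y x (fun h => hxy (by rw [h]))

/-- A tournament is strong if, for every ordered pair of nodes, there is a
directed path from the first to the second. -/
def Strong (T : Tournament) : Prop := ∀ u v : T.V, Relation.ReflTransGen T.arc u v

/-- `HasWalk T u v n` : there is a directed walk of length `n` from `u` to `v`. -/
def HasWalk (T : Tournament) (u v : T.V) (n : ℕ) : Prop :=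
  ∃ f : Fin (n + 1) → T.V, f 0 = u ∧ f (Fin.last n) = v ∧
    ∀ i : Fin n, T.arc (f i.castSucc) (f i.succ)

/-- The distance from `u` to `v`: the length of a shortest directed path. -/
def dist (T : Tournament) (u v : T.V) : ℕ := sInf {n | HasWalk T u v n}

/-- The diameter: the maximum distance over ordered pairs of distinct nodes. -/
def diam (T : Tournament) : ℕ :=
  (Finset.univ.filter (fun p : T.V × T.V => p.1 ≠ p.2)).sup
    (fun p => T.dist p.1 p.2)

/-- The Wiener index: the sum of distances over ordered pairs of distinct nodes. -/
def wiener (T : Tournament) : ℕ :=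
  ∑ p ∈ Finset.univ.filter (fun p : T.V × T.V => p.1 ≠ p.2), T.dist p.1 p.2

/-- The average distance `L(T) = W(T)/(m(m-1))` where `m` is the order. -/
def avgDist (T : Tournament) : ℝ :=
  (T.wiener : ℝ) / ((Fintype.card T.V : ℝ) * ((Fintype.card T.V : ℝ) - 1))

/-- `J` is a subtournament of `K`. -/
def IsSubtournament (J K : Tournament) : Prop :=
  ∃ f : J.V → K.V, Function.Injective f ∧ ∀ u v : J.V, J.arc u v ↔ K.arc (f u) (f v)

/-- The linear order on `t` nodes. -/
def linearTournament (t : ℕ) : Tournament where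
  V := Fin t
  arc := fun i j => i < j
  irrefl := fun i => lt_irrefl i
  exactlyOne := fun i j h => by
    rw [not_lt]
    exact ⟨le_of_lt, fun hle => hle.lt_of_ne h⟩

/-- A tournament is Hamiltonian if it has a directed cycle through all nodes. -/
def IsHamiltonian (T : Tournament) : Prop :=
  ∃ f : ZMod (Fintype.card T.V) ≃ T.V, ∀ i, T.arc (f i) (f (i + 1))

/-- `S` is an in-dominating set. -/
def InDom (T : Tournament) (S : Finset T.V) : Prop :=
  ∀ u, u ∉ S → ∃ v ∈ S, T.arc u v

/-- `S` is an out-dominating set. -/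
def OutDom (T : Tournament) (S : Finset T.V) : Prop :=
  ∀ u, u ∉ S → ∃ v ∈ S, T.arc v u

/-- The in-domination number. -/
def inDomNum (T : Tournament) : ℕ := sInf {n | ∃ S : Finset T.V, T.InDom S ∧ S.card = n}

/-- The out-domination number. -/
def outDomNum (T : Tournament) : ℕ := sInf {n | ∃ S : Finset T.V, T.OutDom S ∧ S.card = n}

end Tournament

open Tournament

/-! A clone reaches every node of `ILTTd T` in at most two steps, so if every node of `T` has an
out-neighbour, then all distances in `ILTTd T` are at most three. In a tournament of order `m` with
this property, `m (m - 1)` ordered pairs are at distance at least one and half of them at distance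
at least two, so the average distance is `3 / 2` plus the proportion of ordered pairs at distance
three. In `ILTTd T` such pairs start at an original node and project to pairs at distance greater
than two in `T`, so each step at most doubles their number, while the number of all pairs roughly
quadruples. -/

namespace Tournament

open Finset Filter

section Walk

variable {T : Tournament} {u v : T.V} {m n : ℕ}

lemma hasWalk_zero : T.HasWalk u v 0 ↔ u = v :=
  ⟨fun ⟨_, hu, hv, _⟩ => hu.symm.trans hv, fun h => ⟨fun _ => u, rfl, h, fun i => i.elim0⟩⟩

lemma hasWalk_succ : T.HasWalk u v (n + 1) ↔ ∃ w, T.arc u w ∧ T.HasWalk w v n := by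
  constructor
  · rintro ⟨f, rfl, rfl, hf⟩
    exact ⟨f 1, hf 0, fun i => f i.succ, rfl, rfl, fun i => hf i.succ⟩
  · rintro ⟨_, hw, f, rfl, rfl, hf⟩
    exact ⟨Fin.cons u f, rfl, rfl, Fin.cases hw hf⟩

/-- `T.ReachesWithin n u v` says that `v` is at distance at most `n` from `u`. It is phrased through
walks because `T.dist u v` has the junk value `0` when there is no walk from `u` to `v`. -/
def ReachesWithin (T : Tournament) (n : ℕ) (u v : T.V) : Prop :=
  ∃ k ≤ n, T.HasWalk u v k

lemma ReachesWithin.mono (hmn : m ≤ n) (h : T.ReachesWithin m u v) : T.ReachesWithin n u v :=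
  let ⟨k, hk, hwalk⟩ := h
  ⟨k, hk.trans hmn, hwalk⟩

lemma reachesWithin_zero : T.ReachesWithin 0 u v ↔ u = v := by
  simp [ReachesWithin, hasWalk_zero]

lemma reachesWithin_succ :
    T.ReachesWithin (n + 1) u v ↔ u = v ∨ ∃ w, T.arc u w ∧ T.ReachesWithin n w v := by
  constructor
  · rintro ⟨_ | k, hk, hwalk⟩
    · exact .inl (hasWalk_zero.mp hwalk)
    · obtain ⟨w, huw, hwv⟩ := hasWalk_succ.mp hwalk
      exact .inr ⟨w, huw, k, Nat.le_of_succ_le_succ hk, hwv⟩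
  · rintro (huv | ⟨w, huw, k, hk, hwv⟩)
    · exact ⟨0, Nat.zero_le _, hasWalk_zero.mpr huv⟩
    · exact ⟨k + 1, Nat.succ_le_succ hk, hasWalk_succ.mpr ⟨w, huw, hwv⟩⟩

lemma reachesWithin_one : T.ReachesWithin 1 u v ↔ u = v ∨ T.arc u v := by
  simp [reachesWithin_succ, reachesWithin_zero]

lemma reachesWithin_two :
    T.ReachesWithin 2 u v ↔ u = v ∨ T.arc u v ∨ ∃ w, T.arc u w ∧ T.arc w v := by
  simp [reachesWithin_succ (n := 1), reachesWithin_one, and_or_left, exists_or]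

lemma ReachesWithin.dist_le_iff (h : T.ReachesWithin m u v) :
    T.dist u v ≤ n ↔ T.ReachesWithin n u v := by
  obtain ⟨k, -, hwalk⟩ := h
  have hshortest : T.HasWalk u v (T.dist u v) :=
    Nat.sInf_mem (s := {n | T.HasWalk u v n}) ⟨k, hwalk⟩
  exact ⟨fun hn => ⟨T.dist u v, hn, hshortest⟩,
    fun ⟨_, hjn, hj⟩ => (Nat.sInf_le hj).trans hjn⟩

lemma dist_self (u : T.V) : T.dist u u = 0 :=
  Nat.sInf_eq_zero.mpr (.inl (hasWalk_zero.mpr rfl))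

lemma ReachesWithin.dist_eq_card (h : T.ReachesWithin m u v) :
    T.dist u v = #{k ∈ range m | ¬ T.ReachesWithin k u v} := by
  have hfilter : {k ∈ range m | ¬ T.ReachesWithin k u v} = range (T.dist u v) := by
    ext k
    simp only [mem_filter, mem_range, ← h.dist_le_iff, not_le]
    exact ⟨And.right, fun hk => ⟨hk.trans_le (h.dist_le_iff.mpr h), hk⟩⟩
  rw [hfilter, card_range]

end Walk

section Wiener

variable {T : Tournament}

/-- The ordered pairs of nodes at distance greater than `n`, where nodes not joined by a walk count
as infinitely far apart. -/
def farPairs (T : Tournament) (n : ℕ) : Finset (T.V × T.V) :=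
  {p | ¬ T.ReachesWithin n p.1 p.2}

lemma mem_farPairs {n : ℕ} {p : T.V × T.V} :
    p ∈ T.farPairs n ↔ ¬ T.ReachesWithin n p.1 p.2 := by
  simp [farPairs]

lemma wiener_eq_sum_card_farPairs {n : ℕ} (hT : ∀ u v, T.ReachesWithin n u v) :
    T.wiener = ∑ k ∈ range n, #(T.farPairs k) := by
  calc T.wiener = ∑ p : T.V × T.V, T.dist p.1 p.2 :=
        sum_filter_of_ne fun p _ hp hdiag => hp (hdiag ▸ dist_self p.1)
    _ = ∑ p : T.V × T.V, #{k ∈ range n | ¬ T.ReachesWithin k p.1 p.2} :=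
        sum_congr rfl fun p _ => (hT p.1 p.2).dist_eq_card
    _ = ∑ k ∈ range n, #(T.farPairs k) :=
        sum_card_bipartiteAbove_eq_sum_card_bipartiteBelow _

lemma card_farPairs_zero (T : Tournament) :
    #(T.farPairs 0) = Fintype.card T.V * (Fintype.card T.V - 1) := by
  have hoffDiag : T.farPairs 0 = univ.offDiag := by
    ext p
    simp [mem_farPairs, reachesWithin_zero]
  rw [hoffDiag, offDiag_card, card_univ, Nat.mul_sub_one]

lemma two_mul_card_farPairs_one (T : Tournament) : 2 * #(T.farPairs 1) = #(T.farPairs 0) := by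
  have hnonarcs : T.farPairs 1 = {p ∈ T.farPairs 0 | ¬ T.arc p.1 p.2} := by
    ext p
    simp [mem_farPairs, reachesWithin_zero, reachesWithin_one]
  have hreverse : #{p ∈ T.farPairs 0 | T.arc p.1 p.2} = #(T.farPairs 1) := by
    refine card_equiv (Equiv.prodComm _ _) fun ⟨u, v⟩ => ?_
    simp only [hnonarcs, mem_filter, mem_farPairs, reachesWithin_zero, Equiv.prodComm_apply,
      Prod.swap_prod_mk, ← ne_eq, ne_comm (a := v)]
    exact and_congr_right (T.exactlyOne u v)
  rw [← card_filter_add_card_filter_not (s := T.farPairs 0) (fun p => T.arc p.1 p.2), hreverse,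
    ← hnonarcs, two_mul]

lemma two_mul_wiener (hT : ∀ u v, T.ReachesWithin 3 u v) :
    2 * T.wiener =
      3 * (Fintype.card T.V * (Fintype.card T.V - 1)) + 2 * #(T.farPairs 2) := by
  rw [wiener_eq_sum_card_farPairs hT, sum_range_succ, sum_range_succ, sum_range_one,
    ← card_farPairs_zero, ← two_mul_card_farPairs_one]
  ring

lemma avgDist_eq [Nontrivial T.V] (hT : ∀ u v, T.ReachesWithin 3 u v) :
    T.avgDist = 3 / 2 +
      (#(T.farPairs 2) : ℝ) / ((Fintype.card T.V : ℝ) * ((Fintype.card T.V : ℝ) - 1)) := by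
  have hcard : (1 : ℝ) < Fintype.card T.V := by exact_mod_cast Fintype.one_lt_card
  have hpairs : (Fintype.card T.V : ℝ) * ((Fintype.card T.V : ℝ) - 1) ≠ 0 :=
    mul_ne_zero (by linarith) (by linarith)
  have hwiener : (2 * T.wiener : ℝ) =
      3 * ((Fintype.card T.V : ℝ) * ((Fintype.card T.V : ℝ) - 1)) + 2 * #(T.farPairs 2) := by
    rw [← Nat.cast_pred Fintype.card_pos]
    exact_mod_cast two_mul_wiener hT
  rw [avgDist, div_add_div _ _ two_ne_zero hpairs, div_eq_div_iff hpairs (by simp [hpairs])]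
  linear_combination (Fintype.card T.V * (Fintype.card T.V - 1) : ℝ) * hwiener

end Wiener

section Sinkless

variable {T : Tournament}

/-- A tournament without sinks: every node has an out-neighbour. It is a consequence of strong
connectivity (beyond one node) that already makes the dual ILTT extension strong. -/
def Sinkless (T : Tournament) : Prop :=
  ∀ u, ∃ v, T.arc u v

lemma Strong.sinkless [Nontrivial T.V] (hT : T.Strong) : T.Sinkless := fun u =>
  let ⟨v, hvu⟩ := exists_ne u
  (hT u v).cases_head.elim (fun h => absurd h.symm hvu) fun ⟨w, huw, _⟩ => ⟨w, huw⟩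

lemma Sinkless.nontrivial [Nonempty T.V] (hT : T.Sinkless) : Nontrivial T.V :=
  let ⟨u⟩ := ‹Nonempty T.V›
  let ⟨v, huv⟩ := hT u
  ⟨u, v, fun h => T.irrefl u (h ▸ huv)⟩

end Sinkless

section ILTTd

variable {T : Tournament} {u v : T.V}

/-- The node `x` of `T`, as a node of the dual ILTT extension. -/
def original (T : Tournament) : T.V → T.ILTTd.V := Sum.inl

/-- The clone `x'` of the node `x` of `T`, in the dual ILTT extension. -/
def clone (T : Tournament) : T.V → T.ILTTd.V := Sum.inr

lemma eq_original_or_eq_clone (x : T.ILTTd.V) :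
    (∃ u, x = T.original u) ∨ ∃ u, x = T.clone u :=
  x.casesOn (fun u => .inl ⟨u, rfl⟩) fun u => .inr ⟨u, rfl⟩

lemma arc_original_original : T.ILTTd.arc (T.original u) (T.original v) ↔ T.arc u v := Iff.rfl

lemma arc_original_clone : T.ILTTd.arc (T.original u) (T.clone v) ↔ T.arc u v := Iff.rfl

lemma arc_clone_original : T.ILTTd.arc (T.clone u) (T.original v) ↔ T.arc u v ∨ u = v := Iff.rfl

lemma arc_clone_clone : T.ILTTd.arc (T.clone u) (T.clone v) ↔ T.arc v u := Iff.rfl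

lemma arc_clone_original_self (u : T.V) : T.ILTTd.arc (T.clone u) (T.original u) :=
  arc_clone_original.mpr (.inr rfl)

lemma card_ILTTd (T : Tournament) : Fintype.card T.ILTTd.V = 2 * Fintype.card T.V :=
  Fintype.card_sum.trans (two_mul _).symm

lemma Sinkless.sinkless_ILTTd (hT : T.Sinkless) : T.ILTTd.Sinkless := fun x => by
  obtain ⟨u, rfl⟩ | ⟨u, rfl⟩ := eq_original_or_eq_clone x
  · obtain ⟨v, huv⟩ := hT u
    exact ⟨T.original v, arc_original_original.mpr huv⟩
  · exact ⟨T.original u, arc_clone_original_self u⟩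

lemma arc_swap_of_not_arc (huv : u ≠ v) (h : ¬ T.arc u v) : T.arc v u :=
  (T.exactlyOne v u huv.symm).mpr h

lemma reachesWithin_two_clone_original (u v : T.V) :
    T.ILTTd.ReachesWithin 2 (T.clone u) (T.original v) := by
  refine reachesWithin_two.mpr (.inr ?_)
  by_cases h : T.arc u v ∨ u = v
  · exact .inl (arc_clone_original.mpr h)
  · obtain ⟨hnarc, hne⟩ := not_or.mp h
    exact .inr ⟨T.clone v, arc_clone_clone.mpr (arc_swap_of_not_arc hne hnarc),
      arc_clone_original_self v⟩

lemma reachesWithin_two_clone_clone (u v : T.V) :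
    T.ILTTd.ReachesWithin 2 (T.clone u) (T.clone v) := by
  rw [reachesWithin_two]
  obtain rfl | hne := eq_or_ne u v
  · exact .inl rfl
  by_cases h : T.arc u v
  · exact .inr (.inr ⟨T.original u, arc_clone_original_self u, arc_original_clone.mpr h⟩)
  · exact .inr (.inl (arc_clone_clone.mpr (arc_swap_of_not_arc hne h)))

lemma reachesWithin_two_clone (u : T.V) (x : T.ILTTd.V) :
    T.ILTTd.ReachesWithin 2 (T.clone u) x := by
  obtain ⟨v, rfl⟩ | ⟨v, rfl⟩ := eq_original_or_eq_clone x
  · exact reachesWithin_two_clone_original u v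
  · exact reachesWithin_two_clone_clone u v

lemma Sinkless.reachesWithin_three_ILTTd (hT : T.Sinkless) (x y : T.ILTTd.V) :
    T.ILTTd.ReachesWithin 3 x y := by
  obtain ⟨u, rfl⟩ | ⟨u, rfl⟩ := eq_original_or_eq_clone x
  · obtain ⟨v, huv⟩ := hT u
    exact reachesWithin_succ.mpr
      (.inr ⟨T.clone v, arc_original_clone.mpr huv, reachesWithin_two_clone v y⟩)
  · exact (reachesWithin_two_clone u y).mono (Nat.le_succ 2)

lemma ReachesWithin.original_original {n : ℕ} (h : T.ReachesWithin n u v) :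
    T.ILTTd.ReachesWithin n (T.original u) (T.original v) :=
  let ⟨k, hk, f, hu, hv, hf⟩ := h
  ⟨k, hk, T.original ∘ f, congrArg T.original hu, congrArg T.original hv, hf⟩

lemma Sinkless.reachesWithin_two_original_clone (hT : T.Sinkless) (h : T.ReachesWithin 2 u v) :
    T.ILTTd.ReachesWithin 2 (T.original u) (T.clone v) := by
  rw [reachesWithin_two] at h ⊢
  obtain rfl | huv | ⟨w, huw, hwv⟩ := h
  · obtain ⟨w, huw⟩ := hT u
    exact .inr (.inr ⟨T.clone w, arc_original_clone.mpr huw, arc_clone_clone.mpr huw⟩)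
  · exact .inr (.inl (arc_original_clone.mpr huv))
  · exact .inr (.inr ⟨T.original w, arc_original_original.mpr huw, arc_original_clone.mpr hwv⟩)

lemma Sinkless.farPairs_two_ILTTd_subset (hT : T.Sinkless) :
    T.ILTTd.farPairs 2 ⊆ (T.farPairs 2).image (Prod.map T.original T.original) ∪
      (T.farPairs 2).image (Prod.map T.original T.clone) := by
  rintro ⟨x, y⟩ hfar
  rw [mem_farPairs] at hfar
  obtain ⟨u, rfl⟩ | ⟨u, rfl⟩ := eq_original_or_eq_clone x
  · obtain ⟨v, rfl⟩ | ⟨v, rfl⟩ := eq_original_or_eq_clone y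
    · have huv : (u, v) ∈ T.farPairs 2 := mem_farPairs.mpr (mt (·.original_original) hfar)
      exact mem_union_left _ (mem_image_of_mem (Prod.map T.original T.original) huv)
    · have huv : (u, v) ∈ T.farPairs 2 :=
        mem_farPairs.mpr (mt hT.reachesWithin_two_original_clone hfar)
      exact mem_union_right _ (mem_image_of_mem (Prod.map T.original T.clone) huv)
  · exact absurd (reachesWithin_two_clone u y) hfar

lemma Sinkless.card_farPairs_two_ILTTd_le (hT : T.Sinkless) :
    #(T.ILTTd.farPairs 2) ≤ 2 * #(T.farPairs 2) := by
  rw [two_mul]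
  exact (card_le_card hT.farPairs_two_ILTTd_subset).trans
    ((card_union_le _ _).trans (add_le_add card_image_le card_image_le))

end ILTTd

section Iterate

variable {T : Tournament}

lemma card_iterate_ILTTd (T : Tournament) (t : ℕ) :
    Fintype.card (ILTTd^[t] T).V = 2 ^ t * Fintype.card T.V := by
  induction t with
  | zero => exact (one_mul _).symm
  | succ t ih => rw [Function.iterate_succ_apply', card_ILTTd, ih, pow_succ', mul_assoc]

lemma Sinkless.sinkless_iterate_ILTTd (hT : T.Sinkless) (t : ℕ) : (ILTTd^[t] T).Sinkless := by
  induction t with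
  | zero => exact hT
  | succ t ih =>
    rw [Function.iterate_succ_apply']
    exact ih.sinkless_ILTTd

lemma Sinkless.card_farPairs_two_iterate_ILTTd_le (hT : T.Sinkless) (t : ℕ) :
    #((ILTTd^[t] T).farPairs 2) ≤ 2 ^ t * #(T.farPairs 2) := by
  induction t with
  | zero => exact (one_mul _).ge
  | succ t ih =>
    rw [Function.iterate_succ_apply', pow_succ', mul_assoc]
    exact (hT.sinkless_iterate_ILTTd t).card_farPairs_two_ILTTd_le.trans (Nat.mul_le_mul_left 2 ih)

lemma Sinkless.tendsto_density_farPairs_two [Nonempty T.V] (hT : T.Sinkless) :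
    Tendsto (fun t : ℕ => (#((ILTTd^[t] T).farPairs 2) : ℝ) /
      ((Fintype.card (ILTTd^[t] T).V : ℝ) * ((Fintype.card (ILTTd^[t] T).V : ℝ) - 1)))
      atTop (nhds 0) := by
  have := hT.nontrivial
  have hcard : (1 : ℝ) < Fintype.card T.V := by exact_mod_cast Fintype.one_lt_card
  have hiterate (t : ℕ) :
      (Fintype.card (ILTTd^[t] T).V : ℝ) = 2 ^ t * (Fintype.card T.V : ℝ) := by
    exact_mod_cast card_iterate_ILTTd T t
  have hfar (t : ℕ) : (#((ILTTd^[t] T).farPairs 2) : ℝ) ≤ 2 ^ t * #(T.farPairs 2) := by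
    exact_mod_cast hT.card_farPairs_two_iterate_ILTTd_le t
  have horder : Tendsto (fun t : ℕ => (2 : ℝ) ^ t * Fintype.card T.V - 1) atTop atTop :=
    tendsto_atTop_add_const_right _ _
      ((tendsto_pow_atTop_atTop_of_one_lt one_lt_two).atTop_mul_const (by linarith))
  have hpos (t : ℕ) : (0 : ℝ) < 2 ^ t * Fintype.card T.V - 1 :=
    sub_pos.mpr (one_lt_mul_of_le_of_lt (one_le_pow₀ one_le_two) hcard)
  simp only [hiterate]
  refine squeeze_zero
    (fun t => div_nonneg (Nat.cast_nonneg _) (mul_nonneg (by positivity) (hpos t).le))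
    (fun t => ?_) (horder.const_div_atTop (#(T.farPairs 2) / Fintype.card T.V : ℝ))
  calc (#((ILTTd^[t] T).farPairs 2) : ℝ) /
        (2 ^ t * Fintype.card T.V * (2 ^ t * Fintype.card T.V - 1))
      ≤ 2 ^ t * #(T.farPairs 2) / (2 ^ t * Fintype.card T.V * (2 ^ t * Fintype.card T.V - 1)) :=
        div_le_div_of_nonneg_right (hfar t) (mul_nonneg (by positivity) (hpos t).le)
    _ = #(T.farPairs 2) / Fintype.card T.V / (2 ^ t * Fintype.card T.V - 1) := by
        rw [← div_div, mul_div_mul_left _ _ (by positivity)]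

end Iterate

end Tournament

theorem stmt10_general (G : Tournament) [Nonempty G.V] (hG : G.Sinkless) :
    Filter.Tendsto (fun t : ℕ => (Tournament.ILTTd^[t] G).avgDist) Filter.atTop
      (nhds (3 / 2 : ℝ)) := by
  have hdensity := hG.tendsto_density_farPairs_two.const_add (3 / 2 : ℝ)
  rw [add_zero] at hdensity
  refine hdensity.congr' ?_
  filter_upwards [Filter.eventually_gt_atTop 0] with t ht
  obtain ⟨s, rfl⟩ := Nat.exists_eq_succ_of_ne_zero ht.ne'
  have hreach : ∀ x y, (Tournament.ILTTd^[s + 1] G).ReachesWithin 3 x y := by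
    rw [Function.iterate_succ_apply']
    exact (hG.sinkless_iterate_ILTTd s).reachesWithin_three_ILTTd
  have : Nonempty (Tournament.ILTTd^[s + 1] G).V := by
    rw [← Fintype.card_pos_iff, card_iterate_ILTTd]
    exact Nat.mul_pos (by positivity) Fintype.card_pos
  have := (hG.sinkless_iterate_ILTTd (s + 1)).nontrivial
  exact (avgDist_eq hreach).symm

/-- For a strong tournament `G` of order at least 3, the average
distances of `ILTT_d^t(G)` converge to `3/2` as `t → ∞`. -/
theorem stmt10 (G : Tournament) (hcard : 3 ≤ Fintype.card G.V) (hG : G.Strong) :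
    Filter.Tendsto (fun t : ℕ => (Tournament.ILTTd^[t] G).avgDist) Filter.atTop
      (nhds (3 / 2 : ℝ)) := by
  have : Nontrivial G.V := Fintype.one_lt_card_iff_nontrivial.mp (by omega)
  exact stmt10_general G hG.sinkless
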